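/- The least integer n ≥ 1 such that the partition graph G_n contains a clique of size 5 (equivalently, such that T_{≥4}(n) is nonempty) is n = 11: G_n contains no 5-clique for n ≤ 10, and G_{11} contains a 5-clique. -/

import Mathlib

/-!
Write the Young diagram of a partition by its column lengths. A transfer removes a box from some
column `a` and adds one to some column `b`, so two adjacent partitions have column-length vectors
differing by `e_b - e_a` with `a ≠ b`.

Let `l` be a vertex of a 5-clique, the other four being reached from `l` by moving a box from
column `a_k` to column `b_k`. Two of these four can only be adjacent if `a_k = a_m` or `b_k = b_m`
(`MovesTo.shared`), and pairs that pairwise agree in a coordinate all agree in one and the same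
coordinate (`const_of_shared`). So either all `a_k` are equal to some `a` and the `b_k` are
distinct, or all `b_k` are equal to some `b` and the `a_k` are distinct. In the first case `l` has
the part `a + 1` and, beside it, all nonzero `b_k` as parts, so `n ≥ 1 + (a + b_1 + ... + b_4)`;
in the second case it has all the parts `a_k + 1` and, beside them, the part `b` if `b ≠ 0`, so
`n ≥ 4 + (b + a_1 + ... + a_4)`. In both cases the bracket is a sum of five distinct natural
numbers, hence at least `10`, and `n ≥ 11` (`eleven_le_of_isNClique`).

For `n = 11`, adding a box to the staircase `(4, 3, 2, 1)` in each of the five possible columns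
gives a 5-clique. Finally, `TGe n 4` is nonempty exactly when a 5-clique exists, because subsets
of cliques are cliques.
-/

open SimpleGraph

/-- `IsTransfer s t` says that the multiset `t` is obtained from the multiset `s` by an
elementary transfer of one unit: remove one unit from some part `a` of `s` (deleting the
part if it becomes `0`) and add one unit to another part `b` of `s`, or create a new part
equal to `1` (encoded by `b = 0`). -/
def IsTransfer (s t : Multiset ℕ) : Prop :=
  ∃ a ∈ s, ∃ b, (b ∈ s.erase a ∨ b = 0) ∧
    t = ((s.erase a).erase b + (if a = 1 then 0 else {a - 1})) + {b + 1}

/-- The partition graph `G_n`: vertices are the partitions of `n`, and two distinct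
partitions are adjacent iff one is obtained from the other by an elementary transfer. -/
def partitionGraph (n : ℕ) : SimpleGraph (Nat.Partition n) :=
  SimpleGraph.fromRel fun l m => IsTransfer l.parts m.parts

/-- The maximum size of a clique of `G_n` containing the partition `l`. -/
noncomputable def maxCliqueSizeThrough (n : ℕ) (l : Nat.Partition n) : ℕ :=
  sSup {m | ∃ s : Finset (Nat.Partition n),
    (partitionGraph n).IsClique ↑s ∧ l ∈ s ∧ s.card = m}

/-- The simplicial thickness `τ_n(l)`: `m` where `m + 1` is the maximum size of a clique
of `G_n` containing `l`. -/
noncomputable def tau (n : ℕ) (l : Nat.Partition n) : ℕ := maxCliqueSizeThrough n l - 1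

/-- The threshold thick zone `T_{≥ r}(n)`. -/
def TGe (n r : ℕ) : Set (Nat.Partition n) := {l | r ≤ tau n l}

/-- The exact regime `T_{= r}(n)`. -/
def TEq (n r : ℕ) : Set (Nat.Partition n) := {l | tau n l = r}

lemma conjParts_sum_aux (N : ℕ) (s : Multiset ℕ) (h : ∀ p ∈ s, p ≤ N) :
    ∑ k ∈ Finset.range N, (s.filter fun p => k + 1 ≤ p).card = s.sum := by
  induction s using Multiset.induction_on with
  | empty => simp
  | cons a s ih =>
    have ha : a ≤ N := h a (Multiset.mem_cons_self a s)
    have hs : ∀ p ∈ s, p ≤ N := fun p hp => h p (Multiset.mem_cons_of_mem hp)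
    have hstep : ∀ k, ((a ::ₘ s).filter fun p => k + 1 ≤ p).card
        = (s.filter fun p => k + 1 ≤ p).card + (if k + 1 ≤ a then 1 else 0) := by
      intro k
      rw [Multiset.filter_cons]
      split_ifs <;> simp [add_comm]
    rw [Finset.sum_congr rfl fun k _ => hstep k, Finset.sum_add_distrib, ih hs,
      Multiset.sum_cons]
    have h1 : ∑ k ∈ Finset.range N, (if k + 1 ≤ a then 1 else 0)
        = ((Finset.range N).filter fun k => k + 1 ≤ a).card := by
      rw [Finset.card_filter]
    have hfil : ((Finset.range N).filter fun k => k + 1 ≤ a) = Finset.range a := by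
      ext k
      simp only [Finset.mem_filter, Finset.mem_range]
      omega
    rw [h1, hfil, Finset.card_range]
    omega

lemma conjParts_sum (N : ℕ) (s : Multiset ℕ) (h : ∀ p ∈ s, p ≤ N) :
    (((Multiset.range N).map fun k => (s.filter fun p => k + 1 ≤ p).card).sum) = s.sum := by
  rw [← conjParts_sum_aux N s h, Finset.sum_eq_multiset_sum, Finset.range_val]

/-- The conjugate partition: its `k`-th part is the number of parts of `l` that are `≥ k`. -/
def conj (n : ℕ) (l : Nat.Partition n) : Nat.Partition n :=
  Nat.Partition.ofSums n
    ((Multiset.range n).map fun k => (l.parts.filter fun p => k + 1 ≤ p).card)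
    (by
      rw [conjParts_sum n l.parts fun p hp =>
        le_of_le_of_eq (Multiset.le_sum_of_mem hp) l.parts_sum]
      exact l.parts_sum)

/-- The main chain of `G_n`: the partitions `(n-k, 1^k)` for `0 ≤ k ≤ n-1`. -/
def mainChain (n : ℕ) : Set (Nat.Partition n) :=
  {l | ∃ k ≤ n - 1, l.parts = (n - k) ::ₘ Multiset.replicate k 1}

/-- The left boundary edge of `G_n`: the partitions `(n-k, k)` for `1 ≤ k ≤ ⌊n/2⌋`. -/
def leftEdge (n : ℕ) : Set (Nat.Partition n) :=
  {l | ∃ k, 1 ≤ k ∧ k ≤ n / 2 ∧ l.parts = (n - k) ::ₘ {k}}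

/-- The right boundary edge of `G_n`: the partitions `(2^k, 1^{n-2k})` for `1 ≤ k ≤ ⌊n/2⌋`. -/
def rightEdge (n : ℕ) : Set (Nat.Partition n) :=
  {l | ∃ k, 1 ≤ k ∧ k ≤ n / 2 ∧
    l.parts = Multiset.replicate k 2 + Multiset.replicate (n - 2 * k) 1}

/-- The boundary framework `B_n`. -/
def framework (n : ℕ) : Set (Nat.Partition n) := mainChain n ∪ leftEdge n ∪ rightEdge n

/-- The outer shell `Sh_r(n)`: vertices of connected components of the subgraph of `G_n`
induced on `T_{≥ r}(n)` that meet the boundary framework `B_n`. -/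
def Sh (n r : ℕ) : Set (Nat.Partition n) :=
  {l | ∃ h : l ∈ TGe n r, ∃ b : TGe n r, (b : Nat.Partition n) ∈ framework n ∧
    (SimpleGraph.induce (TGe n r) (partitionGraph n)).Reachable ⟨l, h⟩ b}

/-- The inner core `Core_r(n)`. -/
def Core (n r : ℕ) : Set (Nat.Partition n) := TGe n r \ Sh n r

/-- The maximum simplicial thickness `τ_max(n)`. -/
noncomputable def tauMax (n : ℕ) : ℕ := sSup (Set.range (tau n))

/-- The maximal-thickness locus `M_n`. -/
noncomputable def maxLocus (n : ℕ) : Set (Nat.Partition n) := {l | tau n l = tauMax n}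


/-! ### Transfers as moves of a box between columns -/

/-- `col s j` is the number of parts of `s` larger than `j`, i.e. the length of the column of
index `j` (counted from `0`) in the Young diagram of `s`. -/
def col (s : Multiset ℕ) (j : ℕ) : ℕ := s.countP (j < ·)

/-- `MovesTo s t a b` is `IsTransfer s t` with the witnesses recorded by column: the box removed
from the part `a + 1` lies in column `a`, and the box added to the part `b` (or to a new part,
if `b = 0`) lies in column `b`. -/
def MovesTo (s t : Multiset ℕ) (a b : ℕ) : Prop :=
  a + 1 ∈ s ∧ (b ∈ s.erase (a + 1) ∨ b = 0) ∧
    t = ((s.erase (a + 1)).erase b + (if a = 0 then 0 else {a})) + {b + 1}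

lemma IsTransfer.exists_movesTo {s t : Multiset ℕ} (hs : 0 ∉ s) (h : IsTransfer s t) :
    ∃ a b, MovesTo s t a b := by
  obtain ⟨a, ha, b, hb, rfl⟩ := h
  obtain _ | a := a
  · exact absurd ha hs
  · exact ⟨a, b, ha, hb, by simp⟩

/-- The reverse of a transfer brings the moved box back to its column. -/
lemma MovesTo.symm {s t : Multiset ℕ} {a b : ℕ} (hs : 0 ∉ s) (h : MovesTo s t a b) :
    MovesTo t s b a := by
  obtain ⟨ha, hb, rfl⟩ := h
  have h0 : 0 ∉ s.erase (a + 1) := fun h => hs (Multiset.mem_of_mem_erase h)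
  have h1 : 0 ∉ (s.erase (a + 1)).erase b := fun h => h0 (Multiset.mem_of_mem_erase h)
  refine ⟨by simp, ?_, ?_⟩
  · rw [Multiset.add_comm, Multiset.singleton_add, Multiset.erase_cons_head]
    by_cases h : a = 0 <;> simp [h]
  · rw [Multiset.add_comm _ {b + 1}, Multiset.singleton_add, Multiset.erase_cons_head]
    have h2 : ((s.erase (a + 1)).erase b + (if a = 0 then 0 else {a})).erase a
        = (s.erase (a + 1)).erase b := by
      by_cases h : a = 0
      · subst h
        simp [Multiset.erase_of_notMem h1]
      · rw [if_neg h, Multiset.add_comm, Multiset.singleton_add, Multiset.erase_cons_head]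
    have h3 : (s.erase (a + 1)).erase b + (if b = 0 then 0 else {b}) = s.erase (a + 1) := by
      by_cases h : b = 0
      · subst h
        simp [Multiset.erase_of_notMem h0]
      · rw [if_neg h, Multiset.add_comm, Multiset.singleton_add,
          Multiset.cons_erase (hb.resolve_right h)]
    rw [h2, h3, Multiset.add_comm, Multiset.singleton_add, Multiset.cons_erase ha]

lemma MovesTo.ne {s t : Multiset ℕ} {a b : ℕ} (hs : 0 ∉ s) (h : MovesTo s t a b)
    (hst : s ≠ t) : a ≠ b := by
  rintro rfl
  -- The reverse of the transfer is given by the same formula, applied to `t`.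
  have hr := (h.symm hs).2.2
  obtain ⟨ha, hb, rfl⟩ := h
  apply hst
  by_cases h : a = 0
  · subst h
    have h0 : 0 ∉ s.erase 1 := fun h => hs (Multiset.mem_of_mem_erase h)
    simp only [zero_add, Multiset.erase_of_notMem h0, if_true, add_zero]
    rw [Multiset.add_comm, Multiset.singleton_add, Multiset.cons_erase ha]
  · rw [if_neg h, Multiset.add_comm _ {a}, Multiset.singleton_add,
      Multiset.cons_erase (hb.resolve_right h), Multiset.add_comm, Multiset.singleton_add,
      Multiset.cons_erase ha]

lemma MovesTo.col_eq {s t : Multiset ℕ} {a b : ℕ} (h : MovesTo s t a b) (j : ℕ) :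
    col t j + (if j = a then 1 else 0) = col s j + (if j = b then 1 else 0) := by
  obtain ⟨ha, hb, rfl⟩ := h
  have h1 : col s j = col (s.erase (a + 1)) j + (if j < a + 1 then 1 else 0) := by
    conv_lhs => rw [← Multiset.cons_erase ha]
    simp [col, Multiset.countP_cons]
  have h2 : col (s.erase (a + 1)) j
      = col ((s.erase (a + 1)).erase b) j + (if j < b then 1 else 0) := by
    by_cases hm : b ∈ s.erase (a + 1)
    · conv_lhs => rw [← Multiset.cons_erase hm]
      simp [col, Multiset.countP_cons]
    · rw [Multiset.erase_of_notMem hm, hb.resolve_left hm]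
      simp
  have h3 : col (((s.erase (a + 1)).erase b + (if a = 0 then 0 else {a})) + {b + 1}) j
      = col ((s.erase (a + 1)).erase b) j + (if j < a then 1 else 0)
        + (if j < b + 1 then 1 else 0) := by
    by_cases h : a = 0 <;>
      simp [col, h, ← Multiset.cons_zero, Multiset.countP_cons]
  rw [h3, h1, h2]
  split_ifs <;> omega

/-- Of two transfers out of `s` whose results are joined by a transfer, both remove a box from
the same column or both add a box to the same column. Otherwise the difference of the column
lengths would have positive part of total size at least `2`, while that of a single transfer is
at most `1`. -/
lemma MovesTo.shared {s t u : Multiset ℕ} {a b a' b' i j : ℕ} (ht : MovesTo s t a b)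
    (hu : MovesTo s u a' b') (hab : a ≠ b) (hab' : a' ≠ b') (htu : MovesTo t u i j) :
    a = a' ∨ b = b' := by
  by_contra! h
  have h1 := ht.col_eq b
  have h2 := hu.col_eq b
  have h3 := htu.col_eq b
  have h4 := ht.col_eq a'
  have h5 := hu.col_eq a'
  have h6 := htu.col_eq a'
  grind

/-! ### Five-cliques need `n ≥ 11` -/

/-- A set of pairs which pairwise agree in some coordinate is constant in one coordinate. -/
lemma const_of_shared {α : Type*} {R : Set α} {a b : α → ℕ}
    (h : ∀ x ∈ R, ∀ y ∈ R, a x = a y ∨ b x = b y) :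
    (∀ x ∈ R, ∀ y ∈ R, a x = a y) ∨ (∀ x ∈ R, ∀ y ∈ R, b x = b y) := by
  by_contra! hc
  obtain ⟨⟨x, hx, y, hy, hxy⟩, ⟨z, hz, w, hw, hzw⟩⟩ := hc
  grind

lemma choose_two_le_sum (s : Finset ℕ) : ∑ i ∈ Finset.range s.card, i ≤ ∑ i ∈ s, i := by
  induction s using Finset.induction_on_max with
  | empty => simp
  | insert m s hm ih =>
    have hn : m ∉ s := fun h => lt_irrefl _ (hm m h)
    rw [Finset.card_insert_of_notMem hn, Finset.sum_range_succ, Finset.sum_insert hn]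
    have : s.card ≤ m := by
      simpa using Finset.card_le_card (fun x hx => Finset.mem_range.2 (hm x hx))
    omega

/-- Five distinct natural numbers have sum at least `0 + 1 + 2 + 3 + 4`. -/
lemma ten_le_add_sum {B : Finset ℕ} {a : ℕ} (ha : a ∉ B) (hB : B.card = 4) :
    10 ≤ a + ∑ i ∈ B, i := by
  have h := choose_two_le_sum (insert a B)
  rw [Finset.card_insert_of_notMem ha, Finset.sum_insert ha, hB] at h
  simpa [Finset.sum_range_succ] using h

lemma sum_le_of_mem {B : Finset ℕ} {s : Multiset ℕ} (h : ∀ b ∈ B, b ∈ s ∨ b = 0) :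
    ∑ i ∈ B, i ≤ s.sum := by
  have h1 : (B.erase 0).val ≤ s := by
    rw [Multiset.le_iff_subset (B.erase 0).nodup]
    intro b hb
    obtain ⟨h0, hb⟩ := Finset.mem_erase.1 hb
    exact (h b hb).resolve_right h0
  have h2 : ∑ i ∈ B.erase 0, i = ∑ i ∈ B, i := Finset.sum_erase B rfl
  obtain ⟨r, rfl⟩ := Multiset.le_iff_exists_add.1 h1
  rw [← h2, Multiset.sum_add, Finset.sum_val]
  simp

lemma partitionGraph_adj {n : ℕ} {l m : Nat.Partition n} (h : (partitionGraph n).Adj l m) :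
    ∃ a b, MovesTo l.parts m.parts a b ∧ a ≠ b := by
  have h0 : ∀ l : Nat.Partition n, 0 ∉ l.parts := fun l h => lt_irrefl _ (l.parts_pos h)
  have hne : l.parts ≠ m.parts := fun e => h.ne (Nat.Partition.ext e)
  rw [partitionGraph, SimpleGraph.fromRel_adj] at h
  obtain ⟨-, h | h⟩ := h
  · obtain ⟨a, b, hm⟩ := h.exists_movesTo (h0 l)
    exact ⟨a, b, hm, hm.ne (h0 l) hne⟩
  · obtain ⟨a, b, hm⟩ := h.exists_movesTo (h0 m)
    exact ⟨b, a, hm.symm (h0 m), (hm.ne (h0 m) hne.symm).symm⟩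

theorem eleven_le_of_isNClique {n : ℕ} {s : Finset (Nat.Partition n)}
    (hs : (partitionGraph n).IsNClique 5 s) : 11 ≤ n := by
  obtain ⟨hc, hcard⟩ := hs
  obtain ⟨l, hl⟩ : s.Nonempty := Finset.card_pos.1 (by omega)
  set R := s.erase l with hR
  have hRcard : R.card = 4 := by rw [hR, Finset.card_erase_of_mem hl, hcard]
  have hadj : ∀ m, ∃ a b, m ∈ R → MovesTo l.parts m.parts a b ∧ a ≠ b := by
    intro m
    by_cases hm : m ∈ R
    · obtain ⟨hml, hm⟩ := Finset.mem_erase.1 hm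
      obtain ⟨a, b, h⟩ := partitionGraph_adj (hc hl hm hml.symm)
      exact ⟨a, b, fun _ => h⟩
    · exact ⟨0, 0, fun h => absurd h hm⟩
  choose a b hab using hadj
  have hinj : ∀ x ∈ R, ∀ y ∈ R, a x = a y → b x = b y → x = y := by
    intro x hx y hy ha hb
    apply Nat.Partition.ext
    rw [(hab x hx).1.2.2, (hab y hy).1.2.2, ha, hb]
  have hshared : ∀ x ∈ (R : Set (Nat.Partition n)), ∀ y ∈ (R : Set (Nat.Partition n)),
      a x = a y ∨ b x = b y := by
    intro x hx y hy
    by_cases hxy : x = y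
    · exact Or.inl (by rw [hxy])
    · obtain ⟨i, j, h, -⟩ := partitionGraph_adj
        (hc (Finset.mem_of_mem_erase hx) (Finset.mem_of_mem_erase hy) hxy)
      exact (hab x hx).1.shared (hab y hy).1 (hab x hx).2 (hab y hy).2 h
  obtain ⟨x, hx⟩ : R.Nonempty := Finset.card_pos.1 (by omega)
  have hsum := l.parts_sum
  rcases const_of_shared hshared with hconst | hconst
  · -- Beside the part `a x + 1`, the nonzero columns `b y` are distinct parts of `l`.
    have hBcard : (R.image b).card = 4 := by
      rw [Finset.card_image_of_injOn, hRcard]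
      exact fun y hy z hz h => hinj y hy z hz (hconst y hy z hz) h
    have hB : a x ∉ R.image b := by
      simp only [Finset.mem_image, not_exists, not_and]
      intro y hy h
      exact (hab y hy).2 (by rw [h, hconst y hy x hx])
    have h1 := ten_le_add_sum hB hBcard
    have h2 : ∑ i ∈ R.image b, i ≤ (l.parts.erase (a x + 1)).sum := by
      apply sum_le_of_mem
      simp only [Finset.mem_image]
      rintro _ ⟨y, hy, rfl⟩
      rw [hconst x hx y hy]
      exact (hab y hy).1.2.1
    have h3 := Multiset.sum_erase (hab x hx).1.1
    omega
  · -- Beside the part `b x` (if nonzero), the `a y + 1` are distinct parts of `l`.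
    have hinja : Set.InjOn a R := fun y hy z hz h => hinj y hy z hz h (hconst y hy z hz)
    have hAcard : (R.image a).card = 4 := by rw [Finset.card_image_of_injOn hinja, hRcard]
    have hA : b x ∉ R.image a := by
      simp only [Finset.mem_image, not_exists, not_and]
      intro y hy h
      exact (hab y hy).2 (by rw [h, hconst y hy x hx])
    have h1 := ten_le_add_sum hA hAcard
    have h2 : ∑ i ∈ (R.image a).image (· + 1), i = ∑ i ∈ R.image a, i + 4 := by
      rw [Finset.sum_image (by simp), Finset.sum_add_distrib]
      simp [hAcard]
    by_cases hb : b x = 0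
    · have h3 : ∑ i ∈ (R.image a).image (· + 1), i ≤ l.parts.sum := by
        apply sum_le_of_mem
        simp only [Finset.mem_image]
        rintro _ ⟨_, ⟨y, hy, rfl⟩, rfl⟩
        exact Or.inl (hab y hy).1.1
      omega
    · have hbx : ∀ y ∈ R, b x ∈ l.parts.erase (a y + 1) := by
        intro y hy
        rw [hconst x hx y hy] at hb ⊢
        exact (hab y hy).1.2.1.resolve_right hb
      have h3 : ∑ i ∈ (R.image a).image (· + 1), i ≤ (l.parts.erase (b x)).sum := by
        apply sum_le_of_mem
        simp only [Finset.mem_image]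
        rintro _ ⟨_, ⟨y, hy, rfl⟩, rfl⟩
        left
        -- If `a y + 1 = b x`, then this part occurs twice in `l`.
        by_cases h : a y + 1 = b x
        · have := hbx y hy
          rwa [← h] at this ⊢
        · exact (Multiset.mem_erase_of_ne h).2 (hab y hy).1.1
      have h4 := Multiset.sum_erase (Multiset.mem_of_mem_erase (hbx x hx))
      omega

/-! ### A five-clique for `n = 11` -/

/-- The parts of the staircase `(4, 3, 2, 1)` with one box added in column `x ≤ 4`: the part `x`
grows by one, or a new part `1` appears if `x = 0`. -/
def stairParts (x : ℕ) : Multiset ℕ := ({4, 3, 2, 1} : Multiset ℕ).erase x + {x + 1}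

/-- The partition of `11` obtained from the staircase `(4, 3, 2, 1)` by adding a box in
column `x`. -/
def stair (x : Fin 5) : Nat.Partition 11 where
  parts := stairParts x
  parts_pos {i} hi := (by decide : ∀ x : Fin 5, ∀ i ∈ stairParts x, 0 < i) x i hi
  parts_sum := (by decide : ∀ x : Fin 5, (stairParts x).sum = 11) x

lemma stair_isTransfer : ∀ x y : Fin 5, x ≠ y → IsTransfer (stair x).parts (stair y).parts := by
  intro x y h
  refine ⟨x + 1, ?_, y, ?_, ?_⟩ <;> simp only [stair] <;> revert x y <;> decide

lemma stair_injective : Function.Injective stair := by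
  intro x y h
  have h : stairParts x = stairParts y := congrArg Nat.Partition.parts h
  revert x y
  decide

lemma exists_isNClique_eleven :
    ∃ s : Finset (Nat.Partition 11), (partitionGraph 11).IsNClique 5 s := by
  refine ⟨Finset.univ.image stair, ?_, ?_⟩
  · intro l hl m hm hne
    simp only [Finset.coe_image, Finset.coe_univ, Set.image_univ, Set.mem_range] at hl hm
    obtain ⟨x, rfl⟩ := hl
    obtain ⟨y, rfl⟩ := hm
    rw [partitionGraph, SimpleGraph.fromRel_adj]
    exact ⟨hne, Or.inl (stair_isTransfer x y fun h => hne (h ▸ rfl))⟩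
  · rw [Finset.card_image_of_injective _ stair_injective]
    simp

/-! ### Thickness and cliques -/

lemma TGe_four_nonempty_iff (n : ℕ) :
    (TGe n 4).Nonempty ↔ ∃ s : Finset (Nat.Partition n), (partitionGraph n).IsNClique 5 s := by
  have hbdd : ∀ l : Nat.Partition n, BddAbove {m | ∃ s : Finset (Nat.Partition n),
      (partitionGraph n).IsClique ↑s ∧ l ∈ s ∧ s.card = m} := by
    rintro l
    refine ⟨Fintype.card (Nat.Partition n), ?_⟩
    rintro _ ⟨s, -, -, rfl⟩
    exact Finset.card_le_univ s
  constructor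
  · rintro ⟨l, hl⟩
    have hl : 4 ≤ maxCliqueSizeThrough n l - 1 := hl
    have hne : {m | ∃ s : Finset (Nat.Partition n),
        (partitionGraph n).IsClique ↑s ∧ l ∈ s ∧ s.card = m}.Nonempty :=
      ⟨1, {l}, by simp, by simp, by simp⟩
    obtain ⟨s, hs, -, hcard⟩ : ∃ s : Finset (Nat.Partition n), (partitionGraph n).IsClique ↑s ∧
        l ∈ s ∧ s.card = maxCliqueSizeThrough n l :=
      Nat.sSup_mem hne (hbdd l)
    obtain ⟨t, hts, ht⟩ := Finset.exists_subset_card_eq (show 5 ≤ s.card by omega)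
    exact ⟨t, hs.subset (by exact_mod_cast hts), ht⟩
  · rintro ⟨s, hs, hcard⟩
    obtain ⟨l, hl⟩ : s.Nonempty := Finset.card_pos.1 (by omega)
    have h : 5 ≤ maxCliqueSizeThrough n l := le_csSup (hbdd l) ⟨s, hs, hl, hcard⟩
    exact ⟨l, show 4 ≤ maxCliqueSizeThrough n l - 1 by omega⟩

/-- The least integer `n ≥ 1` such that `G_n` contains a clique of size 5
(equivalently, such that `T_{≥4}(n)` is nonempty) is `n = 11`. -/
theorem stmt19 :
    IsLeast {n : ℕ | 1 ≤ n ∧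
      ∃ s : Finset (Nat.Partition n), (partitionGraph n).IsNClique 5 s} 11 ∧
    IsLeast {n : ℕ | 1 ≤ n ∧ (TGe n 4).Nonempty} 11 := by
  have h : IsLeast {n : ℕ | 1 ≤ n ∧
      ∃ s : Finset (Nat.Partition n), (partitionGraph n).IsNClique 5 s} 11 :=
    ⟨⟨by norm_num, exists_isNClique_eleven⟩, fun _ ⟨_, _, hs⟩ => eleven_le_of_isNClique hs⟩
  refine ⟨h, ?_⟩
  simp only [TGe_four_nonempty_iff]
  exact h
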